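/- arXiv:2512.02149 — 4 statements merged into one kernel-verified Lean document; each statement's English description precedes it below -/
import Mathlib

section
/- Let s ≥ 2, k ≥ 2, and let D ⊆ R^k be a β-column set. Then exactly q^k − 1 elements x ∈ R^k satisfy ∑_{g∈D} w_Hom(x·g) = q^(sk−1), exactly q^(sk) − q^k elements x ∈ R^k satisfy ∑_{g∈D} w_Hom(x·g) = q^(sk−k−1)·(q^k − 1), and exactly one (x = 0) satisfies ∑_{g∈D} w_Hom(x·g) = 0; these two nonzero weights are distinct, and in particular the minimum homogeneous weight of S_k^β is q^(sk−k−1)·(q^k − 1). -/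
/-- A β-column set: a finite set `D ⊆ R^k` such that every `g ∈ D` has a unit coordinate,
and every vector of `R^k` with a unit coordinate is `u • g` for a unique unit `u` and a
unique `g ∈ D`. -/
def IsBetaColumnSet {R : Type} [CommRing R] {k : ℕ} (D : Finset (Fin k → R)) : Prop :=
  (∀ g ∈ D, ∃ i, IsUnit (g i)) ∧
  (∀ w : Fin k → R, (∃ i, IsUnit (w i)) →
    ∃! ug : Rˣ × (Fin k → R), ug.2 ∈ D ∧ w = (ug.1 : R) • ug.2)

-- The homogeneous weight on a finite chain ring `R` with maximal ideal `⟨γ⟩`, nilpotency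
-- index `s` and residue field of cardinality `q`.
open Classical in
noncomputable def wHom {R : Type} [CommRing R] (γ : R) (s q : ℕ) (y : R) : ℕ :=
  if y = 0 then 0
  else if y ∈ Ideal.span ({γ ^ (s - 1)} : Set R) then q ^ (s - 1)
  else (q - 1) * q ^ (s - 2)

/-!
Write `𝔪 = ⟨γ⟩`. The ideal `⟨γ ^ (s - 1)⟩` has `q` elements and lies in every nonzero ideal, and the
homogeneous weight has the same mean `(q - 1) * q ^ (s - 2)` on each of its cosets. Hence every
nonzero linear form on a finite module has that same mean homogeneous weight.

The vectors `u • g` with `u` a unit and `g ∈ D` run once through `R^k \ 𝔪^k`, so `|Rˣ|` times the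
weight of the codeword of `x` is the total weight of the form `v ↦ x ⬝ᵥ v` over `R^k` minus its
total over `𝔪^k`. The form vanishes on `R^k` iff `x = 0`, and on `𝔪^k` iff `γ • x = 0`, which leaves
two nonzero weights. Since `γ` has `q` annihilators in `R`, exactly `q ^ k` vectors satisfy
`γ • x = 0`.
-/

section Counting

theorem natCard_ker_mul_natCard_map {A M N : Type*} [Ring A] [AddCommGroup M] [AddCommGroup N]
    [Module A M] [Module A N] (f : M →ₗ[A] N) {p : Submodule A M} (hp : LinearMap.ker f ≤ p) :
    Nat.card (LinearMap.ker f) * Nat.card (p.map f) = Nat.card p := by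
  have hindex := AddSubgroup.relIndex_mul_relIndex ⊥ f.toAddMonoidHom.ker p.toAddSubgroup bot_le hp
  rwa [AddSubgroup.relIndex_bot_left, AddSubgroup.relIndex_bot_left,
    AddSubgroup.relIndex_ker] at hindex

theorem card_nsmul_sum_comp_eq_sum_add {G H A ι : Type*} [AddGroup G] [Fintype G] [AddGroup H]
    [AddCommMonoid A] [Fintype ι] (f : G →+ H) {t : ι → H} (ht : ∀ i, t i ∈ f.range) (F : H → A) :
    Fintype.card ι • ∑ g, F (f g) = ∑ g, ∑ i, F (f g + t i) := by
  have translate (i : ι) : ∑ g, F (f g + t i) = ∑ g, F (f g) := by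
    obtain ⟨g₀, hg₀⟩ := ht i
    simpa only [Equiv.coe_addRight, map_add, hg₀] using
      Equiv.sum_comp (Equiv.addRight g₀) fun g => F (f g)
  rw [Finset.sum_comm, Fintype.sum_congr _ _ translate, Finset.sum_const, Finset.card_univ]

theorem pow_mul_pow_sub_one_lt_pow {q s : ℕ} (hs : 2 ≤ s) (hq : 0 < q) (k : ℕ) :
    q ^ (s * k - k - 1) * (q ^ k - 1) < q ^ (s * k - 1) := by
  have hexp : s * k - 1 = s * k - k - 1 + k := by
    have : 2 * k ≤ s * k := Nat.mul_le_mul_right k hs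
    lia
  rw [hexp, pow_add]
  exact Nat.mul_lt_mul_of_pos_left (Nat.sub_one_lt (by positivity)) (by positivity)

theorem pow_mul_pow_sub_one_pos {q k : ℕ} (s : ℕ) (hq : 1 < q) (hk : k ≠ 0) :
    0 < q ^ (s * k - k - 1) * (q ^ k - 1) :=
  Nat.mul_pos (by positivity) (Nat.sub_pos_of_lt (Nat.one_lt_pow hk hq))

end Counting

section LocalRing

open IsLocalRing

theorem one_lt_natCard_residueField (R : Type*) [CommRing R] [IsLocalRing R] [Finite R] :
    1 < Nat.card (ResidueField R) :=
  have : Finite (ResidueField R) := .of_surjective _ residue_surjective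
  Finite.one_lt_card

theorem natCard_units_of_isLocalRing (R : Type*) [CommRing R] [IsLocalRing R] [Finite R] :
    Nat.card Rˣ = Nat.card (maximalIdeal R) * (Nat.card (ResidueField R) - 1) := by
  have hunits : Nat.card Rˣ = Nat.card {y : R // IsUnit y} :=
    Nat.card_congr (Equiv.ofBijective (fun u => ⟨u, u.isUnit⟩)
      ⟨fun _ _ huv => Units.ext (congrArg Subtype.val huv), fun y => ⟨y.2.unit, rfl⟩⟩)
  have hsum : Nat.card Rˣ + Nat.card (maximalIdeal R) = Nat.card R := by
    classical
    rw [hunits, ← Nat.card_congr (Equiv.sumCompl fun y : R => IsUnit y), Nat.card_sum]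
    rfl
  rw [Nat.mul_sub_one]
  exact eq_tsub_of_add_eq
    (hsum.trans (Submodule.card_eq_card_quotient_mul_card (maximalIdeal R)))

theorem sum_filter_not_exists_isUnit {R ι A : Type*} [CommRing R] [IsLocalRing R] [Fintype R]
    [Fintype (maximalIdeal R)] [Fintype ι] [DecidableEq ι] [AddCommMonoid A]
    [DecidablePred fun v : ι → R => ∃ i, IsUnit (v i)] (F : (ι → R) → A) :
    ∑ v with ¬ ∃ i, IsUnit (v i), F v = ∑ w : ι → maximalIdeal R, F fun i => w i := by
  classical
  have hmem (v : ι → R) :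
      v ∈ ({v | ¬ ∃ i, IsUnit (v i)} : Finset (ι → R)) ↔ ∀ i, v i ∈ maximalIdeal R := by
    simp only [Finset.mem_filter_univ, not_exists, mem_maximalIdeal, mem_nonunits_iff]
  rw [Finset.sum_subtype _ hmem]
  exact Fintype.sum_equiv Equiv.subtypePiEquivPi _ _ fun _ => rfl

/-- `γ` generates the maximal ideal of the local ring `R` and has nilpotency index exactly `s`; in
other words, `R` is a chain ring of length `s` with uniformizer `γ`. The field `pow_pred_ne_zero`
forces `1 ≤ s`, since `s = 0` would give `1 = 0` in `R`. -/
structure IsNilpotentUniformizer {R : Type*} [CommRing R] [IsLocalRing R] (γ : R) (s : ℕ) :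
    Prop where
  maximalIdeal_eq : maximalIdeal R = Ideal.span {γ}
  pow_eq_zero : γ ^ s = 0
  pow_pred_ne_zero : γ ^ (s - 1) ≠ 0

namespace IsNilpotentUniformizer

variable {R : Type*} [CommRing R] [IsLocalRing R] {γ : R} {s : ℕ}

theorem pos (h : IsNilpotentUniformizer γ s) : 0 < s := by
  refine Nat.pos_of_ne_zero ?_
  rintro rfl
  exact h.pow_pred_ne_zero h.pow_eq_zero

theorem mem_maximalIdeal_iff_dvd (h : IsNilpotentUniformizer γ s) {y : R} :
    y ∈ maximalIdeal R ↔ γ ∣ y := by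
  rw [h.maximalIdeal_eq, Ideal.mem_span_singleton]

theorem pow_eq_zero_iff (h : IsNilpotentUniformizer γ s) {j : ℕ} : γ ^ j = 0 ↔ s ≤ j := by
  refine ⟨fun hj => ?_, fun hj => pow_eq_zero_of_le hj h.pow_eq_zero⟩
  by_contra hlt
  exact h.pow_pred_ne_zero (pow_eq_zero_of_le (by lia) hj)

theorem exists_eq_pow_mul_units (h : IsNilpotentUniformizer γ s) {y : R} (hy : y ≠ 0) :
    ∃ j < s, ∃ u : Rˣ, y = γ ^ j * u := by
  have hfinite : FiniteMultiplicity γ y :=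
    ⟨s, by rwa [pow_succ, h.pow_eq_zero, zero_mul, zero_dvd_iff]⟩
  obtain ⟨u, hyu, hu⟩ := hfinite.exists_eq_pow_mul_and_not_dvd
  rw [← h.mem_maximalIdeal_iff_dvd, notMem_maximalIdeal] at hu
  refine ⟨_, ?_, hu.unit, hyu⟩
  by_contra! hle
  exact hy (by rw [hyu, h.pow_eq_zero_iff.2 hle, zero_mul])

theorem span_pow_pred_le (h : IsNilpotentUniformizer γ s) {I : Ideal R} (hI : I ≠ ⊥) :
    Ideal.span {γ ^ (s - 1)} ≤ I := by
  obtain ⟨y, hyI, hy⟩ := Submodule.exists_mem_ne_zero_of_ne_bot hI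
  obtain ⟨j, hj, u, rfl⟩ := h.exists_eq_pow_mul_units hy
  rw [Ideal.span_singleton_le_iff_mem]
  exact I.mem_of_dvd (u.isUnit.mul_right_dvd.2 (pow_dvd_pow γ (by lia))) hyI

theorem ker_mulLeft (h : IsNilpotentUniformizer γ s) :
    LinearMap.ker (LinearMap.mulLeft R γ) = Ideal.span {γ ^ (s - 1)} := by
  refine le_antisymm (fun y hy => ?_) ?_
  · rw [LinearMap.mem_ker, LinearMap.mulLeft_apply] at hy
    rcases eq_or_ne y 0 with rfl | hy₀
    · exact zero_mem _
    obtain ⟨j, -, u, rfl⟩ := h.exists_eq_pow_mul_units hy₀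
    rw [← mul_assoc, u.mul_left_eq_zero, ← pow_succ', h.pow_eq_zero_iff] at hy
    exact Ideal.mem_span_singleton.2 ((pow_dvd_pow γ (by lia)).mul_right _)
  · rw [Ideal.span_singleton_le_iff_mem, LinearMap.mem_ker, LinearMap.mulLeft_apply,
      mul_pow_sub_one h.pos.ne', h.pow_eq_zero]

theorem torsionOf_pow_pred (h : IsNilpotentUniformizer γ s) :
    Ideal.torsionOf R R (γ ^ (s - 1)) = maximalIdeal R := by
  refine le_antisymm (le_maximalIdeal ?_) ?_
  · rw [Ne, Ideal.torsionOf_eq_top_iff]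
    exact h.pow_pred_ne_zero
  · rw [h.maximalIdeal_eq, Ideal.span_singleton_le_iff_mem, Ideal.mem_torsionOf_iff, smul_eq_mul,
      mul_pow_sub_one h.pos.ne', h.pow_eq_zero]

theorem natCard_span_pow_pred (h : IsNilpotentUniformizer γ s) :
    Nat.card (Ideal.span {γ ^ (s - 1)}) = Nat.card (ResidueField R) := by
  rw [ResidueField, ← h.torsionOf_pow_pred]
  exact (Nat.card_congr (Ideal.quotTorsionOfEquivSpanSingleton R R (γ ^ (s - 1))).toEquiv).symm

theorem natCard_span_pow (h : IsNilpotentUniformizer γ s) {j : ℕ} (hj : j ≤ s) :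
    Nat.card (Ideal.span {γ ^ j}) = Nat.card (ResidueField R) ^ (s - j) := by
  induction hj using Nat.decreasingInduction with
  | self => simp [h.pow_eq_zero]
  | of_succ j hj ih =>
    have hker : LinearMap.ker (LinearMap.mulLeft R γ) ≤ Ideal.span {γ ^ j} := by
      rw [h.ker_mulLeft]
      exact Ideal.span_singleton_le_span_singleton.2 (pow_dvd_pow γ (by lia))
    have hmap : Submodule.map (LinearMap.mulLeft R γ) (Ideal.span {γ ^ j}) =
        Ideal.span {γ ^ (j + 1)} := by
      rw [Ideal.span, Submodule.map_span, Set.image_singleton, LinearMap.mulLeft_apply, ← pow_succ']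
    rw [← natCard_ker_mul_natCard_map _ hker, hmap, ih, h.ker_mulLeft, h.natCard_span_pow_pred,
      ← pow_succ', show s - (j + 1) + 1 = s - j by lia]

theorem natCard_eq (h : IsNilpotentUniformizer γ s) :
    Nat.card R = Nat.card (ResidueField R) ^ s := by
  have hspan := h.natCard_span_pow (Nat.zero_le s)
  rwa [pow_zero, Ideal.span_singleton_one, Nat.card_congr Submodule.topEquiv.toEquiv] at hspan

theorem natCard_maximalIdeal (h : IsNilpotentUniformizer γ s) :
    Nat.card (maximalIdeal R) = Nat.card (ResidueField R) ^ (s - 1) := by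
  rw [h.maximalIdeal_eq, ← h.natCard_span_pow h.pos, pow_one]

section Vectors

variable {ι : Type*} [Fintype ι]

theorem forall_maximalIdeal_dotProduct_eq_zero_iff (h : IsNilpotentUniformizer γ s) {x : ι → R} :
    (∀ w : ι → maximalIdeal R, (x ⬝ᵥ fun i => (w i : R)) = 0) ↔ γ • x = 0 := by
  have hmove (v : ι → R) : x ⬝ᵥ (γ • v) = (γ • x) ⬝ᵥ v := by
    rw [dotProduct_smul, smul_dotProduct]
  constructor
  · intro hx
    refine dotProduct_eq_zero_iff.1 fun v => ?_
    rw [← hmove]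
    exact hx fun i => ⟨γ * v i, h.mem_maximalIdeal_iff_dvd.2 (dvd_mul_right γ (v i))⟩
  · intro hx w
    choose v hv using fun i => h.mem_maximalIdeal_iff_dvd.1 (w i).2
    rw [show (fun i => (w i : R)) = γ • v from funext hv, hmove, hx, zero_dotProduct]

theorem exists_smul_ne_zero (ι : Type*) [Nonempty ι] (h : IsNilpotentUniformizer γ s)
    (hs : 2 ≤ s) : ∃ x : ι → R, γ • x ≠ 0 := by
  have hγ : γ ≠ 0 := fun h₀ => by
    have := h.pow_eq_zero_iff.1 ((pow_one γ).trans h₀)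
    lia
  obtain ⟨i⟩ := ‹Nonempty ι›
  exact ⟨1, fun h₀ => hγ (by simpa using congrFun h₀ i)⟩

theorem natCard_smul_eq_zero (h : IsNilpotentUniformizer γ s) :
    Nat.card {x : ι → R // γ • x = 0} = Nat.card (ResidueField R) ^ Fintype.card ι := by
  have hcoord (x : ι → R) : γ • x = 0 ↔ ∀ i, x i ∈ LinearMap.ker (LinearMap.mulLeft R γ) :=
    funext_iff
  rw [Nat.card_congr ((Equiv.subtypeEquivRight hcoord).trans Equiv.subtypePiEquivPi), Nat.card_fun,
    h.ker_mulLeft, h.natCard_span_pow_pred, Nat.card_eq_fintype_card (α := ι)]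

theorem natCard_smul_eq_zero_and_ne_zero (h : IsNilpotentUniformizer γ s) :
    Nat.card {x : ι → R // γ • x = 0 ∧ x ≠ 0} = Nat.card (ResidueField R) ^ Fintype.card ι - 1 := by
  rw [← h.natCard_smul_eq_zero]
  exact Set.ncard_sdiff_singleton_of_mem (s := {x : ι → R | γ • x = 0}) (smul_zero γ)

theorem natCard_smul_ne_zero [Finite R] (h : IsNilpotentUniformizer γ s) :
    Nat.card {x : ι → R // γ • x ≠ 0} =
      Nat.card (ResidueField R) ^ (s * Fintype.card ι) -
        Nat.card (ResidueField R) ^ Fintype.card ι := by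
  rw [pow_mul, ← h.natCard_eq, ← h.natCard_smul_eq_zero, ← Nat.card_eq_fintype_card (α := ι),
    ← Nat.card_fun]
  exact Set.ncard_compl {x : ι → R | γ • x = 0}

end Vectors

end IsNilpotentUniformizer

end LocalRing

section HomogeneousWeight

variable {R : Type} [CommRing R] {γ : R} {s q : ℕ}

theorem wHom_zero : wHom γ s q 0 = 0 :=
  if_pos rfl

theorem wHom_of_notMem {y : R} (hy : y ∉ Ideal.span {γ ^ (s - 1)}) :
    wHom γ s q y = (q - 1) * q ^ (s - 2) := by
  have hy₀ : y ≠ 0 := fun h₀ => hy (h₀ ▸ zero_mem _)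
  rw [wHom, if_neg hy₀, if_neg hy]

theorem wHom_units_mul (u : Rˣ) (y : R) : wHom γ s q (u * y) = wHom γ s q y := by
  classical
  unfold wHom
  exact if_congr u.mul_right_eq_zero rfl
    (if_congr (Ideal.unit_mul_mem_iff_mem _ u.isUnit) rfl rfl)

theorem sum_wHom_span_pow_pred (hs : 2 ≤ s) [Fintype (Ideal.span {γ ^ (s - 1)})]
    (hcard : Fintype.card (Ideal.span {γ ^ (s - 1)}) = q) :
    ∑ t : Ideal.span {γ ^ (s - 1)}, wHom γ s q t = q * ((q - 1) * q ^ (s - 2)) := by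
  classical
  have hval (t : Ideal.span {γ ^ (s - 1)}) :
      wHom γ s q t = if t = 0 then 0 else q ^ (s - 1) := by
    simp only [wHom, t.2, if_true, ZeroMemClass.coe_eq_zero]
  calc ∑ t : Ideal.span {γ ^ (s - 1)}, wHom γ s q t
      = (q - 1) * q ^ (s - 1) := by
        rw [Fintype.sum_congr _ _ hval, Finset.sum_ite, Finset.sum_const_zero, zero_add,
          Finset.sum_const, smul_eq_mul, Finset.filter_ne',
          Finset.card_erase_of_mem (Finset.mem_univ 0), Finset.card_univ, hcard]
    _ = q * ((q - 1) * q ^ (s - 2)) := by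
        rw [show s - 1 = s - 2 + 1 by lia, pow_succ']
        ring

theorem sum_wHom_add_span_pow_pred (hs : 2 ≤ s) [Fintype (Ideal.span {γ ^ (s - 1)})]
    (hcard : Fintype.card (Ideal.span {γ ^ (s - 1)}) = q) (y : R) :
    ∑ t : Ideal.span {γ ^ (s - 1)}, wHom γ s q (y + t) = q * ((q - 1) * q ^ (s - 2)) := by
  by_cases hy : y ∈ Ideal.span {γ ^ (s - 1)}
  · rw [← sum_wHom_span_pow_pred hs hcard]
    exact Equiv.sum_comp (Equiv.addLeft (⟨y, hy⟩ : Ideal.span {γ ^ (s - 1)}))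
      fun t => wHom γ s q t
  · have hval (t : Ideal.span {γ ^ (s - 1)}) : wHom γ s q (y + t) = (q - 1) * q ^ (s - 2) :=
      wHom_of_notMem fun h => hy ((Submodule.add_mem_iff_left _ t.2).1 h)
    rw [Fintype.sum_congr _ _ hval, Finset.sum_const, Finset.card_univ, hcard, smul_eq_mul]

namespace IsNilpotentUniformizer

open IsLocalRing

variable [IsLocalRing R]

theorem natCard_units [Finite R] (h : IsNilpotentUniformizer γ s) (hs : 2 ≤ s)
    (hq : Nat.card (ResidueField R) = q) : Nat.card Rˣ = q * ((q - 1) * q ^ (s - 2)) := by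
  rw [natCard_units_of_isLocalRing, h.natCard_maximalIdeal, hq, show s - 1 = s - 2 + 1 by lia,
    pow_succ']
  ring

theorem sum_wHom_linearMap [Finite R] (h : IsNilpotentUniformizer γ s) (hs : 2 ≤ s)
    (hq : Nat.card (ResidueField R) = q) {M : Type*} [AddCommGroup M] [Module R M]
    [Fintype M] {f : M →ₗ[R] R} (hf : f ≠ 0) :
    ∑ m, wHom γ s q (f m) = Fintype.card M * ((q - 1) * q ^ (s - 2)) := by
  have := Fintype.ofFinite (Ideal.span {γ ^ (s - 1)} : Ideal R)
  have hcard : Fintype.card (Ideal.span {γ ^ (s - 1)}) = q := by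
    rw [← Nat.card_eq_fintype_card, h.natCard_span_pow_pred, hq]
  have hrange : Ideal.span {γ ^ (s - 1)} ≤ LinearMap.range f :=
    h.span_pow_pred_le (LinearMap.range_eq_bot.not.2 hf)
  have hsum := card_nsmul_sum_comp_eq_sum_add f.toAddMonoidHom
    (t := fun t : Ideal.span {γ ^ (s - 1)} => (t : R)) (fun t => hrange t.2) (wHom γ s q)
  simp only [sum_wHom_add_span_pow_pred hs hcard, hcard, Finset.sum_const, Finset.card_univ,
    smul_eq_mul, LinearMap.toAddMonoidHom_coe] at hsum
  have hq₀ : 0 < q := hq ▸ (one_lt_natCard_residueField R).pos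
  exact Nat.eq_of_mul_eq_mul_left hq₀ (hsum.trans (mul_left_comm _ _ _))

theorem sum_wHom_dotProduct {ι : Type*} [Fintype ι] [DecidableEq ι] [Fintype R]
    (h : IsNilpotentUniformizer γ s) (hs : 2 ≤ s) (hq : Nat.card (ResidueField R) = q)
    {x : ι → R} (hx : x ≠ 0) :
    ∑ v : ι → R, wHom γ s q (x ⬝ᵥ v) =
      q ^ (s * Fintype.card ι) * ((q - 1) * q ^ (s - 2)) := by
  have hf : dotProductBilin R R x ≠ 0 := fun h₀ =>
    hx (dotProduct_eq_zero_iff.1 fun v => LinearMap.congr_fun h₀ v)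
  have hcard : Fintype.card (ι → R) = q ^ (s * Fintype.card ι) := by
    rw [Fintype.card_fun, ← Nat.card_eq_fintype_card, h.natCard_eq, hq, pow_mul]
  rw [← hcard]
  exact h.sum_wHom_linearMap hs hq hf

theorem sum_wHom_dotProduct_maximalIdeal {ι : Type*} [Fintype ι] [DecidableEq ι] [Finite R]
    [Fintype (maximalIdeal R)] (h : IsNilpotentUniformizer γ s) (hs : 2 ≤ s)
    (hq : Nat.card (ResidueField R) = q) {x : ι → R} (hx : γ • x ≠ 0) :
    ∑ w : ι → maximalIdeal R, wHom γ s q (x ⬝ᵥ fun i => (w i : R)) =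
      q ^ ((s - 1) * Fintype.card ι) * ((q - 1) * q ^ (s - 2)) := by
  have hf : dotProductBilin R R x ∘ₗ (maximalIdeal R).subtype.compLeft ι ≠ 0 := fun h₀ =>
    hx (h.forall_maximalIdeal_dotProduct_eq_zero_iff.1 fun w => LinearMap.congr_fun h₀ w)
  have hcard : Fintype.card (ι → maximalIdeal R) = q ^ ((s - 1) * Fintype.card ι) := by
    rw [Fintype.card_fun, ← Nat.card_eq_fintype_card, h.natCard_maximalIdeal, hq, pow_mul]
  rw [← hcard]
  exact h.sum_wHom_linearMap hs hq hf

end IsNilpotentUniformizer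

end HomogeneousWeight

section SimplexCode

open IsLocalRing

variable {R : Type} [CommRing R] {γ : R} {s q k : ℕ}

theorem IsBetaColumnSet.sum_filter_exists_isUnit [Fintype R] {A : Type*} [AddCommMonoid A]
    {D : Finset (Fin k → R)} (hD : IsBetaColumnSet D)
    [DecidablePred fun v : Fin k → R => ∃ i, IsUnit (v i)] {F : (Fin k → R) → A}
    (hF : ∀ (u : Rˣ) v, F ((u : R) • v) = F v) :
    ∑ v with ∃ i, IsUnit (v i), F v = Nat.card Rˣ • ∑ g ∈ D, F g := by
  classical
  have hunit (u : Rˣ) {g : Fin k → R} (hg : g ∈ D) : ∃ i, IsUnit (((u : R) • g) i) :=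
    (hD.1 g hg).imp fun i hi => u.isUnit.mul hi
  have hbij : ∑ p ∈ (Finset.univ : Finset Rˣ) ×ˢ D, F p.2 = ∑ v with ∃ i, IsUnit (v i), F v := by
    refine Finset.sum_bij (fun p _ => (p.1 : R) • p.2) (fun p hp => ?_) (fun p hp p' hp' h => ?_)
      (fun v hv => ?_) fun p _ => (hF p.1 p.2).symm
    · exact Finset.mem_filter.2 ⟨Finset.mem_univ _, hunit p.1 (Finset.mem_product.1 hp).2⟩
    · have hp := (Finset.mem_product.1 hp).2
      exact (hD.2 _ (hunit p.1 hp)).unique ⟨hp, rfl⟩ ⟨(Finset.mem_product.1 hp').2, h⟩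
    · obtain ⟨p, ⟨hp, rfl⟩, -⟩ := hD.2 v (Finset.mem_filter.1 hv).2
      exact ⟨p, Finset.mem_product.2 ⟨Finset.mem_univ _, hp⟩, rfl⟩
  rw [← hbij, Finset.sum_product]
  simp only [Finset.sum_const, Finset.card_univ, Nat.card_eq_fintype_card]

/-- The homogeneous weight of the codeword `(x·g)_{g ∈ D}` of the linear code whose generator matrix
has column set `D`. -/
noncomputable def codewordWeight (γ : R) (s q : ℕ) (D : Finset (Fin k → R)) (x : Fin k → R) : ℕ :=
  ∑ g ∈ D, wHom γ s q (x ⬝ᵥ g)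

theorem codewordWeight_zero (D : Finset (Fin k → R)) : codewordWeight γ s q D 0 = 0 :=
  Finset.sum_eq_zero fun g _ => by rw [zero_dotProduct, wHom_zero]

variable [IsLocalRing R]

theorem IsBetaColumnSet.natCard_units_mul_codewordWeight_add [Fintype R]
    [Fintype (maximalIdeal R)] {D : Finset (Fin k → R)} (hD : IsBetaColumnSet D) (x : Fin k → R) :
    Nat.card Rˣ * codewordWeight γ s q D x +
        ∑ w : Fin k → maximalIdeal R, wHom γ s q (x ⬝ᵥ fun i => (w i : R)) =
      ∑ v : Fin k → R, wHom γ s q (x ⬝ᵥ v) := by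
  classical
  have hunits (u : Rˣ) (v : Fin k → R) :
      wHom γ s q (x ⬝ᵥ ((u : R) • v)) = wHom γ s q (x ⬝ᵥ v) := by
    rw [dotProduct_smul, smul_eq_mul, wHom_units_mul]
  rw [codewordWeight, ← smul_eq_mul, ← hD.sum_filter_exists_isUnit hunits,
    ← sum_filter_not_exists_isUnit fun v => wHom γ s q (x ⬝ᵥ v),
    Finset.sum_filter_add_sum_filter_not]

section Weights

variable [Finite R] {D : Finset (Fin k → R)} {x : Fin k → R}

open Classical in
theorem IsBetaColumnSet.mul_codewordWeight_add (hD : IsBetaColumnSet D)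
    (h : IsNilpotentUniformizer γ s) (hs : 2 ≤ s) (hq : Nat.card (ResidueField R) = q)
    (hx : x ≠ 0) :
    q * codewordWeight γ s q D x + (if γ • x = 0 then 0 else q ^ ((s - 1) * k)) = q ^ (s * k) := by
  have := Fintype.ofFinite R
  have hq₁ : 1 < q := hq ▸ one_lt_natCard_residueField R
  have hmean : 0 < (q - 1) * q ^ (s - 2) := Nat.mul_pos (by lia) (by positivity)
  have hmaximal : ∑ w : Fin k → maximalIdeal R, wHom γ s q (x ⬝ᵥ fun i => (w i : R)) =
      (if γ • x = 0 then 0 else q ^ ((s - 1) * k)) * ((q - 1) * q ^ (s - 2)) := by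
    split_ifs with hγx
    · simp only [h.forall_maximalIdeal_dotProduct_eq_zero_iff.2 hγx, wHom_zero,
        Finset.sum_const_zero, zero_mul]
    · rw [h.sum_wHom_dotProduct_maximalIdeal hs hq hγx, Fintype.card_fin]
  have htotal := hD.natCard_units_mul_codewordWeight_add (γ := γ) (s := s) (q := q) x
  rw [hmaximal, h.sum_wHom_dotProduct hs hq hx, h.natCard_units hs hq, Fintype.card_fin] at htotal
  refine Nat.eq_of_mul_eq_mul_right hmean (htotal ▸ ?_)
  ring

theorem IsBetaColumnSet.codewordWeight_of_smul_eq_zero (hD : IsBetaColumnSet D)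
    (h : IsNilpotentUniformizer γ s) (hs : 2 ≤ s) (hq : Nat.card (ResidueField R) = q)
    (hx : x ≠ 0) (hγx : γ • x = 0) : codewordWeight γ s q D x = q ^ (s * k - 1) := by
  have hk : 0 < k := (Function.ne_iff.1 hx).choose.pos
  have hsk : s * k ≠ 0 := by positivity
  have hq₀ : 0 < q := hq ▸ (one_lt_natCard_residueField R).pos
  have hmul := hD.mul_codewordWeight_add h hs hq hx
  rw [if_pos hγx, add_zero, ← mul_pow_sub_one hsk] at hmul
  exact Nat.eq_of_mul_eq_mul_left hq₀ hmul

theorem IsBetaColumnSet.codewordWeight_of_smul_ne_zero (hD : IsBetaColumnSet D)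
    (h : IsNilpotentUniformizer γ s) (hs : 2 ≤ s) (hq : Nat.card (ResidueField R) = q)
    (hγx : γ • x ≠ 0) : codewordWeight γ s q D x = q ^ (s * k - k - 1) * (q ^ k - 1) := by
  have hx : x ≠ 0 := right_ne_zero_of_smul hγx
  have hk : 0 < k := (Function.ne_iff.1 hx).choose.pos
  have hq₀ : 0 < q := hq ▸ (one_lt_natCard_residueField R).pos
  have hsub : (s - 1) * k = s * k - k := Nat.sub_one_mul s k
  have hpred : (s - 1) * k ≠ 0 := Nat.mul_ne_zero (by lia) hk.ne'
  have hpow : q ^ (s * k) = q ^ (s * k - k) * q ^ k := by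
    rw [← pow_add]
    congr 1
    lia
  have hmul := hD.mul_codewordWeight_add h hs hq hx
  rw [if_neg hγx, hpow, hsub, ← mul_pow_sub_one (hsub ▸ hpred), ← mul_add, mul_assoc] at hmul
  rw [Nat.mul_sub_one]
  exact eq_tsub_of_add_eq (Nat.eq_of_mul_eq_mul_left hq₀ hmul)

open Classical in
theorem IsBetaColumnSet.codewordWeight_eq_ite (hD : IsBetaColumnSet D)
    (h : IsNilpotentUniformizer γ s) (hs : 2 ≤ s) (hq : Nat.card (ResidueField R) = q)
    (x : Fin k → R) :
    codewordWeight γ s q D x =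
      if x = 0 then 0
      else if γ • x = 0 then q ^ (s * k - 1)
      else q ^ (s * k - k - 1) * (q ^ k - 1) := by
  split_ifs with hx hγx
  · rw [hx, codewordWeight_zero]
  · exact hD.codewordWeight_of_smul_eq_zero h hs hq hx hγx
  · exact hD.codewordWeight_of_smul_ne_zero h hs hq hγx

theorem IsBetaColumnSet.codewordWeight_eq_pow_iff (hD : IsBetaColumnSet D)
    (h : IsNilpotentUniformizer γ s) (hs : 2 ≤ s) (hq : Nat.card (ResidueField R) = q) :
    codewordWeight γ s q D x = q ^ (s * k - 1) ↔ γ • x = 0 ∧ x ≠ 0 := by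
  have hq₀ : 0 < q := hq ▸ (one_lt_natCard_residueField R).pos
  have hlt := pow_mul_pow_sub_one_lt_pow hs hq₀ k
  rw [hD.codewordWeight_eq_ite h hs hq]
  split_ifs with hx hγx
  · simp only [hx, (pow_pos hq₀ _).ne, ne_eq, not_true, and_false]
  · simp only [hx, hγx, ne_eq, not_false_iff, and_self]
  · simp only [hγx, hlt.ne, false_and]

theorem IsBetaColumnSet.codewordWeight_eq_pow_mul_iff (hD : IsBetaColumnSet D)
    (h : IsNilpotentUniformizer γ s) (hs : 2 ≤ s) (hq : Nat.card (ResidueField R) = q)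
    (hk : k ≠ 0) :
    codewordWeight γ s q D x = q ^ (s * k - k - 1) * (q ^ k - 1) ↔ γ • x ≠ 0 := by
  have hq₁ : 1 < q := hq ▸ one_lt_natCard_residueField R
  have hpos := pow_mul_pow_sub_one_pos s hq₁ hk
  have hlt := pow_mul_pow_sub_one_lt_pow hs hq₁.pos k
  rw [hD.codewordWeight_eq_ite h hs hq]
  split_ifs with hx hγx
  · simp only [hx, smul_zero, hpos.ne, ne_eq, not_true]
  · simp only [hγx, hlt.ne', ne_eq, not_true]
  · simp only [hγx, ne_eq, not_false_iff]

theorem IsBetaColumnSet.pow_mul_le_codewordWeight (hD : IsBetaColumnSet D)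
    (h : IsNilpotentUniformizer γ s) (hs : 2 ≤ s) (hq : Nat.card (ResidueField R) = q)
    (hx : x ≠ 0) : q ^ (s * k - k - 1) * (q ^ k - 1) ≤ codewordWeight γ s q D x := by
  have hq₀ : 0 < q := hq ▸ (one_lt_natCard_residueField R).pos
  rw [hD.codewordWeight_eq_ite h hs hq, if_neg hx]
  split_ifs
  · exact (pow_mul_pow_sub_one_lt_pow hs hq₀ k).le
  · exact le_rfl

theorem IsBetaColumnSet.codewordWeight_eq_zero_iff (hD : IsBetaColumnSet D)
    (h : IsNilpotentUniformizer γ s) (hs : 2 ≤ s) (hq : Nat.card (ResidueField R) = q) :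
    codewordWeight γ s q D x = 0 ↔ x = 0 := by
  refine ⟨fun hweight => ?_, fun hx => hx ▸ codewordWeight_zero D⟩
  by_contra hx
  have hk : k ≠ 0 := (Function.ne_iff.1 hx).choose.pos.ne'
  have hpos := pow_mul_pow_sub_one_pos s (hq ▸ one_lt_natCard_residueField R) hk
  exact (hpos.trans_le (hD.pow_mul_le_codewordWeight h hs hq hx)).ne' hweight

end Weights

end SimplexCode

/-- For `s ≥ 2`, `k ≥ 2` and a β-column set `D ⊆ R^k`: exactly `q^k − 1`
elements `x ∈ R^k` have homogeneous codeword weight `q^(sk−1)`, exactly `q^(sk) − q^k` have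
weight `q^(sk−k−1)·(q^k − 1)`, and exactly one (namely `x = 0`) has weight `0`; the two
nonzero weights are distinct, and the minimum homogeneous weight of `S_k^β` is
`q^(sk−k−1)·(q^k − 1)`. -/
theorem stmt_16
    (R : Type) [CommRing R] [IsLocalRing R] [Fintype R]
    (γ : R) (s q : ℕ)
    (hs : 2 ≤ s)
    (hmax : IsLocalRing.maximalIdeal R = Ideal.span {γ})
    (hnil : γ ^ s = 0)
    (hnil' : γ ^ (s - 1) ≠ 0)
    (hq : Nat.card (R ⧸ Ideal.span ({γ} : Set R)) = q)
    (k : ℕ) (hk : 2 ≤ k)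
    (D : Finset (Fin k → R)) (hD : IsBetaColumnSet D) :
    Nat.card {x : Fin k → R //
        ∑ g ∈ D, wHom γ s q (∑ i, x i * g i) = q ^ (s * k - 1)} = q ^ k - 1 ∧
    Nat.card {x : Fin k → R //
        ∑ g ∈ D, wHom γ s q (∑ i, x i * g i) = q ^ (s * k - k - 1) * (q ^ k - 1)}
      = q ^ (s * k) - q ^ k ∧
    Nat.card {x : Fin k → R // ∑ g ∈ D, wHom γ s q (∑ i, x i * g i) = 0} = 1 ∧
    q ^ (s * k - 1) ≠ q ^ (s * k - k - 1) * (q ^ k - 1) ∧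
    (∀ x : Fin k → R, x ≠ 0 →
      q ^ (s * k - k - 1) * (q ^ k - 1) ≤ ∑ g ∈ D, wHom γ s q (∑ i, x i * g i)) ∧
    (∃ x : Fin k → R, x ≠ 0 ∧
      ∑ g ∈ D, wHom γ s q (∑ i, x i * g i) = q ^ (s * k - k - 1) * (q ^ k - 1)) := by
  have h : IsNilpotentUniformizer γ s := ⟨hmax, hnil, hnil'⟩
  have hq' : Nat.card (IsLocalRing.ResidueField R) = q := by
    rw [IsLocalRing.ResidueField, hmax, hq]
  have hq₀ : 0 < q := hq' ▸ (one_lt_natCard_residueField R).pos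
  have hk₀ : k ≠ 0 := by lia
  have : Nonempty (Fin k) := ⟨⟨0, by lia⟩⟩
  have hweight (x : Fin k → R) :
      ∑ g ∈ D, wHom γ s q (∑ i, x i * g i) = codewordWeight γ s q D x := rfl
  simp only [hweight, hD.codewordWeight_eq_pow_iff h hs hq',
    hD.codewordWeight_eq_pow_mul_iff h hs hq' hk₀, hD.codewordWeight_eq_zero_iff h hs hq']
  refine ⟨?_, ?_, Nat.card_unique, (pow_mul_pow_sub_one_lt_pow hs hq₀ k).ne',
    fun x hx => hD.pow_mul_le_codewordWeight h hs hq' hx, ?_⟩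
  · rw [h.natCard_smul_eq_zero_and_ne_zero, hq', Fintype.card_fin]
  · rw [h.natCard_smul_ne_zero, hq', Fintype.card_fin]
  · obtain ⟨x, hx⟩ := h.exists_smul_ne_zero (Fin k) hs
    exact ⟨x, right_ne_zero_of_smul hx, hx⟩
end

section
/- Let q ≥ 2, s ≥ 1, and k ≥ 1 be integers. Then ∑_{i=0}^{k−1} ⌈q^(s(k−1)) / q^i⌉ = q^((s−1)(k−1))·(q^k − 1)/(q − 1). Consequently, since q^(s(k−1)) is the minimum Hamming distance of the linear simplex β code S_k^β and the right-hand side is its length L_β(k), the code S_k^β attains the Griesmer bound ∑_{i=0}^{k−1} ⌈d/q^i⌉ ≤ n with equality. -/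
theorem ceil_intCast_pow_div_pow {K : Type*} [Field K] [LinearOrder K] [IsStrictOrderedRing K]
    [FloorRing K] {q : ℤ} (hq : q ≠ 0) {i n : ℕ} (hin : i ≤ n) :
    ⌈(q : K) ^ n / (q : K) ^ i⌉ = q ^ (n - i) := by
  have hquot : (q : K) ^ n / (q : K) ^ i = ((q ^ (n - i) : ℤ) : K) := by
    rw [Int.cast_pow, pow_sub₀ _ (Int.cast_ne_zero.mpr hq) hin, div_eq_mul_inv]
  rw [hquot, Int.ceil_intCast]

theorem sum_range_succ_pow_add_sub {R : Type*} [Semiring R] (x : R) (m r : ℕ) :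
    ∑ i ∈ Finset.range (r + 1), x ^ (m + r - i) = x ^ m * ∑ i ∈ Finset.range (r + 1), x ^ i := by
  rw [← Finset.sum_range_reflect (fun i => x ^ i), Finset.mul_sum]
  refine Finset.sum_congr rfl fun i hi => ?_
  have hir : i ≤ r := Finset.mem_range_succ_iff.mp hi
  rw [Nat.add_sub_cancel, ← pow_add, Nat.add_sub_assoc hir]

/-- The simplex β code is the case `m = (s - 1)(k - 1)`, `r = k - 1`, where `m + r = s(k - 1)`. -/
theorem stmt_17_general {K : Type*} [Field K] [LinearOrder K] [IsStrictOrderedRing K]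
    [FloorRing K] {q : ℤ} (hq : q ≠ 0) (m r : ℕ) :
    ∑ i ∈ Finset.range (r + 1), ⌈(q : K) ^ (m + r) / (q : K) ^ i⌉
      = q ^ m * ∑ i ∈ Finset.range (r + 1), q ^ i := by
  rw [← sum_range_succ_pow_add_sub]
  exact Finset.sum_congr rfl fun i hi => ceil_intCast_pow_div_pow hq <|
    (Finset.mem_range_succ_iff.mp hi).trans (Nat.le_add_left r m)

/-- For integers `q ≥ 2`, `s ≥ 1`, `k ≥ 1`,
`∑_{i=0}^{k−1} ⌈q^(s(k−1))/q^i⌉ = q^((s−1)(k−1))·(q^k − 1)/(q − 1)`; the right-hand side is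
written via the geometric sum `∑_{i<k} q^i = (q^k − 1)/(q − 1)`. Consequently, since
`q^(s(k−1))` is the minimum Hamming distance of `S_k^β` and the right-hand side is its
length `L_β(k)`, the linear simplex β code attains the Griesmer bound with equality. -/
theorem stmt_17 (q s k : ℕ) (hq : 2 ≤ q) (hs : 1 ≤ s) (hk : 1 ≤ k) :
    ∑ i ∈ Finset.range k, ⌈((q : ℚ) ^ (s * (k - 1)) / (q : ℚ) ^ i)⌉
      = (q : ℤ) ^ ((s - 1) * (k - 1)) * ∑ i ∈ Finset.range k, (q : ℤ) ^ i := by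
  obtain ⟨t, rfl⟩ := Nat.exists_eq_add_of_le' hs
  obtain ⟨r, rfl⟩ := Nat.exists_eq_add_of_le' hk
  simpa [add_one_mul] using stmt_17_general (K := ℚ) (q := q) (by positivity) (t * r) r
end

section
/- Let q ≥ 2, s ≥ 1, and k ≥ 1 be integers. Then ∑_{i=0}^{k−1} ⌈(q−1)·q^(sk−1) / q^i⌉ = q^(sk) − q^((s−1)k), which is strictly less than q^(sk). Consequently, since (q−1)·q^(sk−1) is the minimum Hamming distance of the linear simplex α code S_k^α and q^(sk) is its length, the code S_k^α does not attain the Griesmer bound ∑_{i=0}^{k−1} ⌈d/q^i⌉ ≤ n with equality. -/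
/-! With `N = s * k`, the `i`-th quotient is `q ^ (N - i) - q ^ (N - (i + 1))`, which is an integer
because `i < k ≤ N`. So no summand is rounded, and the sum telescopes to `q ^ N - q ^ (N - k)`. -/

theorem sub_one_mul_pow_div_pow_eq_sub {K : Type*} [DivisionRing K] {x : K} (hx : x ≠ 0)
    {N i : ℕ} (hi : i < N) :
    (x - 1) * x ^ (N - 1) / x ^ i = x ^ (N - i) - x ^ (N - (i + 1)) := by
  have hexp : N - 1 - i + 1 = N - i := by lia
  calc (x - 1) * x ^ (N - 1) / x ^ i
      = (x - 1) * x ^ (N - 1 - i) := by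
        rw [mul_div_assoc, div_eq_mul_inv, ← pow_sub₀ x hx (Nat.le_sub_one_of_lt hi)]
    _ = x ^ (N - i) - x ^ (N - (i + 1)) := by
        rw [sub_one_mul, ← pow_succ', hexp, Nat.sub_sub, Nat.add_comm 1 i]

section Ceil

variable {K : Type*} [Field K] [LinearOrder K] [IsStrictOrderedRing K] [FloorRing K] {q : ℤ}

theorem ceil_sub_one_mul_pow_div_pow (hq : q ≠ 0) {N i : ℕ} (hi : i < N) :
    ⌈((q : K) - 1) * (q : K) ^ (N - 1) / (q : K) ^ i⌉ = q ^ (N - i) - q ^ (N - (i + 1)) := by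
  rw [sub_one_mul_pow_div_pow_eq_sub (Int.cast_ne_zero.mpr hq) hi]
  exact_mod_cast Int.ceil_intCast (R := K) (q ^ (N - i) - q ^ (N - (i + 1)))

theorem sum_range_ceil_sub_one_mul_pow_div_pow (hq : q ≠ 0) {N m : ℕ} (hm : m ≤ N) :
    ∑ i ∈ Finset.range m, ⌈((q : K) - 1) * (q : K) ^ (N - 1) / (q : K) ^ i⌉
      = q ^ N - q ^ (N - m) :=
  calc ∑ i ∈ Finset.range m, ⌈((q : K) - 1) * (q : K) ^ (N - 1) / (q : K) ^ i⌉
      = ∑ i ∈ Finset.range m, (q ^ (N - i) - q ^ (N - (i + 1))) :=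
        Finset.sum_congr rfl fun _ hi ↦
          ceil_sub_one_mul_pow_div_pow hq ((Finset.mem_range.mp hi).trans_le hm)
    _ = q ^ N - q ^ (N - m) := Finset.sum_range_sub' (fun i ↦ q ^ (N - i)) m

end Ceil

/-- For integers `q ≥ 2`, `s ≥ 1`, `k ≥ 1`,
`∑_{i=0}^{k−1} ⌈(q−1)·q^(sk−1)/q^i⌉ = q^(sk) − q^((s−1)k) < q^(sk)`. Consequently, since
`(q−1)·q^(sk−1)` is the minimum Hamming distance of `S_k^α` and `q^(sk)` is its length, the
linear simplex α code does not attain the Griesmer bound with equality. -/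
theorem stmt_18 (q s k : ℕ) (hq : 2 ≤ q) (hs : 1 ≤ s) (hk : 1 ≤ k) :
    (∑ i ∈ Finset.range k, ⌈(((q : ℚ) - 1) * (q : ℚ) ^ (s * k - 1) / (q : ℚ) ^ i)⌉
      = (q : ℤ) ^ (s * k) - (q : ℤ) ^ ((s - 1) * k)) ∧
    (q : ℤ) ^ (s * k) - (q : ℤ) ^ ((s - 1) * k) < (q : ℤ) ^ (s * k) := by
  have hq_pos : (0 : ℤ) < q := by lia
  have hks : k ≤ s * k := Nat.le_mul_of_pos_left k hs
  constructor
  · rw [Nat.sub_one_mul]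
    exact_mod_cast sum_range_ceil_sub_one_mul_pow_div_pow (K := ℚ) hq_pos.ne' hks
  · exact sub_lt_self _ (pow_pos hq_pos _)
end

section
/- Let p be a prime, s ≥ 1, k ≥ 1, and let R = Z_{p^s} (the integers modulo p^s). For every nonzero x ∈ R^k with additive order m = ord(x) (the least positive integer m with m·x = 0, a power of p dividing p^s), the number of v ∈ R^k with x·v ≠ 0 equals p^(sk) − (p^s/m)·p^(s(k−1)). That is, the Hamming weight of every nonzero codeword c of the Z_{p^s}-additive simplex α code S_k^α is p^(sk) − (p^s/ord(c))·p^(s(k−1)). -/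
/-!
The sum `∑ i, v i • x i` is linear in `v` with image the span of the `x i`, so the number of `v`
where it vanishes is `|R| ^ |ι|` divided by the size of this span. An integer kills the span exactly
when it kills every `x i`, so the exponent of the span is the additive order of `x`; when the
additive group of the module is cyclic, this exponent is the size of the span.
-/

section

variable {R M ι : Type*}

lemma exponent_span_range [Semiring R] [AddCommMonoid M] [Module R M] (x : ι → M) :
    AddMonoid.exponent (Submodule.span R (Set.range x)) = addOrderOf x := by
  refine Nat.dvd_right_iff_eq.mp fun d ↦ ?_
  have span_le_ker_iff : Submodule.span R (Set.range x) ≤ (d • LinearMap.id : M →ₗ[R] M).ker ↔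
      ∀ i, d • x i = 0 := by
    simp [Submodule.span_le, Set.range_subset_iff]
  rw [AddMonoid.exponent_dvd_iff_forall_nsmul_eq_zero, addOrderOf_dvd_iff_nsmul_eq_zero]
  simpa [SetLike.le_def, funext_iff, Subtype.ext_iff] using span_le_ker_iff

lemma addOrderOf_dvd_card_ring (R : Type*) [Ring R] [AddCommMonoid M] [Module R M] (y : M) :
    addOrderOf y ∣ Nat.card R := by
  refine addOrderOf_dvd_of_nsmul_eq_zero ?_
  calc Nat.card R • y = (Nat.card R • (1 : R)) • y := by rw [smul_assoc, one_smul]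
    _ = 0 := by rw [card_nsmul_eq_zero', zero_smul]

variable [Ring R] [AddCommGroup M] [Module R M]

lemma card_span_range_of_isAddCyclic [IsAddCyclic M] (x : ι → M) :
    Nat.card (Submodule.span R (Set.range x)) = addOrderOf x := by
  have : IsAddCyclic (Submodule.span R (Set.range x)) :=
    (Submodule.span R (Set.range x)).toAddSubgroup.isAddCyclic
  rw [← IsAddCyclic.exponent_eq_card, exponent_span_range]

variable [Fintype ι]

lemma card_ker_linearCombination_mul_card_span (x : ι → M) :
    Nat.card (Fintype.linearCombination R x).ker * Nat.card (Submodule.span R (Set.range x)) =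
      Nat.card R ^ Fintype.card ι := by
  let f : (ι → R) →+ M := (Fintype.linearCombination R x).toAddMonoidHom
  calc Nat.card (Fintype.linearCombination R x).ker * Nat.card (Submodule.span R (Set.range x))
      = Nat.card f.ker * Nat.card f.range := by rw [← Fintype.range_linearCombination]; rfl
    _ = Nat.card (ι → R) := by rw [← AddSubgroup.index_ker, AddSubgroup.card_mul_index]
    _ = Nat.card R ^ Fintype.card ι := by rw [Nat.card_fun, Nat.card_eq_fintype_card (α := ι)]

variable [Finite R] [IsAddCyclic M] [Nonempty ι]

lemma card_ker_linearCombination_of_isAddCyclic (x : ι → M) :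
    Nat.card (Fintype.linearCombination R x).ker =
      Nat.card R / addOrderOf x * Nat.card R ^ (Fintype.card ι - 1) := by
  have order_dvd : addOrderOf x ∣ Nat.card R := addOrderOf_dvd_card_ring R x
  refine Nat.eq_of_mul_eq_mul_right (Nat.pos_of_dvd_of_pos order_dvd Nat.card_pos) ?_
  calc Nat.card (Fintype.linearCombination R x).ker * addOrderOf x
      = Nat.card R ^ Fintype.card ι := by
        rw [← card_span_range_of_isAddCyclic (R := R), card_ker_linearCombination_mul_card_span]
    _ = Nat.card R / addOrderOf x * Nat.card R ^ (Fintype.card ι - 1) * addOrderOf x := by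
        rw [mul_right_comm, Nat.div_mul_cancel order_dvd, mul_pow_sub_one Fintype.card_ne_zero]

theorem stmt_19_general (x : ι → M) :
    Nat.card {v : ι → R // ∑ i, v i • x i ≠ 0} =
      Nat.card R ^ Fintype.card ι -
        Nat.card R / addOrderOf x * Nat.card R ^ (Fintype.card ι - 1) := by
  rw [← card_ker_linearCombination_of_isAddCyclic, ← Nat.card_eq_fintype_card (α := ι),
    ← Nat.card_fun]
  exact Set.ncard_compl ((Fintype.linearCombination R x).ker : Set (ι → R))

end

/-- For `R = Z_{p^s}` and nonzero `x ∈ R^k` of additive order `m`, the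
Hamming weight of the codeword `(x·v)_{v∈R^k}` of the `Z_{p^s}`-additive simplex α code
`S_k^α` equals `p^(sk) − (p^s/m)·p^(s(k−1))`. -/
theorem stmt_19 (p : ℕ) (hp : p.Prime) (s k : ℕ) (hs : 1 ≤ s) (hk : 1 ≤ k)
    (x : Fin k → ZMod (p ^ s)) (hx : x ≠ 0)
    (m : ℕ) (hm : m = addOrderOf x) :
    Nat.card {v : Fin k → ZMod (p ^ s) // ∑ i, x i * v i ≠ 0}
      = p ^ (s * k) - (p ^ s / m) * p ^ (s * (k - 1)) := by
  have : NeZero k := ⟨Nat.ne_zero_of_lt hk⟩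
  have : NeZero (p ^ s) := ⟨pow_ne_zero s hp.ne_zero⟩
  simpa [hm, mul_comm, pow_mul] using stmt_19_general (R := ZMod (p ^ s)) x
end
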